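/- Let d ≥ 2, k ≥ 1 and ℓ : Fin k → ℝ with ℓ i > 0 for all i, with open-chain work map φ, and let e₁ be the first standard basis vector of EuclideanSpace ℝ (Fin d). Define the reduced configuration space of the associated prismatic closed (k+1)-chain as Ĉ = {u ∈ (S^{d-1})^k : φ(u) = t • e₁ for some t ≥ 0}. Let u⁰ ∈ (S^{d-1})^k with v := φ(u⁰) ≠ 0, let R be a linear isometry of EuclideanSpace ℝ (Fin d) with R v = ‖v‖ • e₁, and set û⁰ = (R (u⁰ i))_i ∈ Ĉ. Then there exist an open neighborhood W of u⁰ in (S^{d-1})^k, an open neighborhood U of û⁰ in Ĉ, and a homeomorphism h : W → U × ℝ^{d−1} such that h(u⁰) = (û⁰, 0) and ‖φ(w)‖ = ‖φ((h w).1)‖ for every w ∈ W. -/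

import Mathlib

open scoped BigOperators

/-!
Off the closed ray spanned by `-e₁`, the direction `a` of the end point `φ u` varies in the sphere
punctured at `-e₁`, which stereographic projection identifies with `ℝ^(d-1)`. Over the punctured
sphere there is a continuous family of linear isometries carrying `a` to `e₁`, with the identity at
`a = e₁`. Turning the whole chain by this isometry moves its end point to the ray of `e₁` without
changing its distance from the origin, and `u` is recovered from the turned chain and `a`.
-/

open Metric NormedSpace

noncomputable section

section Chains

variable {E ι : Type*} [NormedAddCommGroup E]

variable (E ι) in
/-- The pointed configuration space of the open chain with links indexed by `ι`: the tuples of unit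
direction vectors of the links. -/
def openChains : Set (ι → E) := {u | ∀ i, ‖u i‖ = 1}

variable [NormedSpace ℝ E] {E' 𝓕 : Type*} [NormedAddCommGroup E'] [NormedSpace ℝ E']
  [FunLike 𝓕 E E']

lemma isometry_comp_mem_openChains_iff [SemilinearIsometryClass 𝓕 (RingHom.id ℝ) E E'] (T : 𝓕)
    {u : ι → E} : (fun i ↦ T (u i)) ∈ openChains E' ι ↔ u ∈ openChains E ι := by
  simp only [openChains, Set.mem_ofPred_eq, SemilinearIsometryClass.norm_map]

variable [Fintype ι] (ℓ : ι → ℝ) (e : sphere (0 : E) 1)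

/-- The work map, sending the direction vectors of a chain with lengths `ℓ` to its end point. -/
def workMap (u : ι → E) : E := ∑ i, ℓ i • u i

lemma workMap_linearMap_comp [LinearMapClass 𝓕 ℝ E E'] (T : 𝓕) (u : ι → E) :
    workMap ℓ (fun i ↦ T (u i)) = T (workMap ℓ u) := by
  simp only [workMap, map_sum, map_smul]

lemma continuous_workMap : Continuous (workMap ℓ : (ι → E) → E) := by
  unfold workMap
  fun_prop

/-- The reduced configuration space of the prismatic closed chain: the open chains that end on the
ray spanned by `e`. -/
def prismaticChains : Set (ι → E) :=
  {u | u ∈ openChains E ι ∧ ∃ t : ℝ, 0 ≤ t ∧ workMap ℓ u = t • (e : E)}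

/-- The prismatic chains whose end point is not the origin. -/
def nonzeroPrismaticChains : Set (ι → E) :=
  {u | workMap ℓ u ≠ 0} ∩ prismaticChains ℓ e

/-- The open chains whose end point is off the closed ray spanned by `-e`, a condition equivalent
to `p + ‖p‖ • e ≠ 0` for the end point `p`. -/
def slitChains : Set (ι → E) :=
  {u | workMap ℓ u + ‖workMap ℓ u‖ • (e : E) ≠ 0} ∩ openChains E ι

variable {ℓ e} {u : ι → E}

lemma workMap_ne_zero_of_mem_slitChains (hu : u ∈ slitChains ℓ e) : workMap ℓ u ≠ 0 :=
  fun h ↦ hu.1 (by simp [h])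

lemma normalize_workMap_ne_neg (hu : u ∈ slitChains ℓ e) :
    normalize (workMap ℓ u) ≠ -(e : E) := by
  intro h
  refine hu.1 ?_
  nth_rewrite 1 [← norm_smul_normalize (workMap ℓ u)]
  rw [h, smul_neg, neg_add_cancel]

lemma mem_slitChains_of_workMap_eq_smul (hu : u ∈ openChains E ι) {t : ℝ} (ht : 0 < t)
    {a : sphere (0 : E) 1} (ha : a ≠ -e) (h : workMap ℓ u = t • (a : E)) :
    u ∈ slitChains ℓ e := by
  refine ⟨fun h₀ ↦ ha ?_, hu⟩
  rw [h, norm_smul, norm_eq_of_mem_sphere, mul_one, Real.norm_of_nonneg ht.le, ← smul_add,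
    smul_eq_zero_iff_right ht.ne'] at h₀
  exact Subtype.ext (eq_neg_of_add_eq_zero_left h₀)

lemma exists_pos_workMap_eq_smul (hu : u ∈ nonzeroPrismaticChains ℓ e) :
    ∃ t : ℝ, 0 < t ∧ workMap ℓ u = t • (e : E) := by
  obtain ⟨hne, -, t, ht, h⟩ := hu
  refine ⟨t, ht.lt_of_ne' fun h₀ ↦ hne ?_, h⟩
  rw [h, h₀, zero_smul]

variable (ℓ e) in
/-- The direction of the end point, as a point of the punctured sphere. -/
def endDirection (u : slitChains ℓ e) : ({-e}ᶜ : Set (sphere (0 : E) 1)) :=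
  ⟨⟨normalize (workMap ℓ u.1), mem_sphere_zero_iff_norm.2 <|
    norm_normalize_eq_one_iff.2 (workMap_ne_zero_of_mem_slitChains u.2)⟩,
    fun h ↦ normalize_workMap_ne_neg u.2 (congrArg Subtype.val h)⟩

variable (ℓ e) in
lemma continuous_endDirection : Continuous (endDirection ℓ e) := by
  have hφ : Continuous fun u : slitChains ℓ e ↦ workMap ℓ u.1 :=
    (continuous_workMap ℓ).comp continuous_subtype_val
  have hne : ∀ u : slitChains ℓ e, ‖workMap ℓ u.1‖ ≠ 0 := fun u ↦
    norm_ne_zero_iff.2 (workMap_ne_zero_of_mem_slitChains u.2)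
  exact ((hφ.norm.inv₀ hne).smul hφ).subtype_mk _ |>.subtype_mk _

lemma norm_smul_endDirection (u : slitChains ℓ e) :
    ‖workMap ℓ u.1‖ • (endDirection ℓ e u : E) = workMap ℓ u.1 :=
  norm_smul_normalize _

lemma endDirection_eq_of_workMap_eq_smul (u : slitChains ℓ e) {t : ℝ} (ht : 0 < t)
    {a : ({-e}ᶜ : Set (sphere (0 : E) 1))} (h : workMap ℓ u.1 = t • (a : E)) :
    endDirection ℓ e u = a := by
  refine Subtype.ext (Subtype.ext ?_)
  change normalize (workMap ℓ u.1) = a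
  rw [h, normalize_smul_of_pos ht, normalize_eq_self_of_norm_eq_one (norm_eq_of_mem_sphere _)]

variable (ℓ e) in
lemma exists_isOpen_preimage_slitChains_eq (T : E ≃ₗᵢ[ℝ] E) :
    ∃ O, IsOpen O ∧ (fun (u : ι → E) i ↦ T (u i)) ⁻¹' slitChains ℓ e = O ∩ openChains E ι := by
  have hφ := continuous_workMap (E := E) ℓ
  have isOpen_slit : IsOpen {u : ι → E | workMap ℓ u + ‖workMap ℓ u‖ • (e : E) ≠ 0} :=
    isOpen_ne_fun (hφ.add (hφ.norm.smul continuous_const)) continuous_const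
  have preimage_openChains : (fun (u : ι → E) i ↦ T (u i)) ⁻¹' openChains E ι = openChains E ι :=
    Set.ext fun _ ↦ isometry_comp_mem_openChains_iff T
  refine ⟨_, isOpen_slit.preimage (f := fun u i ↦ T (u i)) ?_, ?_⟩
  · exact continuous_pi fun i ↦ T.continuous.comp (continuous_apply i)
  · rw [slitChains, Set.preimage_inter, preimage_openChains]

end Chains

variable {E : Type*} [NormedAddCommGroup E] [InnerProductSpace ℝ E]

section Alignment

/-- A linear isometry carrying `a` to `e` whenever `‖a‖ = ‖e‖`. The reflection in the hyperplane
orthogonal to `a - e` would do so too, but it is discontinuous at `a = e`; the product of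
reflections in two lines used here is continuous in `a ≠ -e` and is the identity for `a = e`. -/
def alignIsometry (e a : E) : E ≃ₗᵢ[ℝ] E :=
  (ℝ ∙ (a + e)).reflection.trans (ℝ ∙ e).reflection

lemma alignIsometry_apply_of_norm_eq {e a : E} (h : ‖a‖ = ‖e‖) : alignIsometry e a a = e := by
  have reflection_eq : (ℝ ∙ (a + e)).reflection a = e := by
    have := Submodule.reflection_sub (v := a) (w := -e) (by rwa [norm_neg])
    rwa [sub_neg_eq_add, Submodule.reflection_orthogonal_apply, neg_inj] at this
  rw [alignIsometry, LinearIsometryEquiv.trans_apply, reflection_eq]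
  exact Submodule.reflection_mem_subspace_eq_self (Submodule.mem_span_singleton_self e)

lemma alignIsometry_apply_of_mem_sphere (e a : sphere (0 : E) 1) : alignIsometry (e : E) a a = e :=
  alignIsometry_apply_of_norm_eq (by simp only [norm_eq_of_mem_sphere])

lemma alignIsometry_self (e : E) : alignIsometry e e = .refl ℝ E := by
  have span_eq : (ℝ ∙ (e + e)) = ℝ ∙ e := by
    rw [← two_smul ℝ e]
    exact Submodule.span_singleton_smul_eq (IsUnit.mk0 2 two_ne_zero) e
  ext x
  simp [alignIsometry, span_eq]

variable {X : Type*} [TopologicalSpace X] {f g : X → E}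

lemma continuous_reflection_span_singleton (hf : Continuous f) (hg : Continuous g)
    (hf₀ : ∀ x, f x ≠ 0) : Continuous fun x ↦ (ℝ ∙ f x).reflection (g x) := by
  simp only [Submodule.reflection_singleton_apply, RCLike.ofReal_real_eq_id, id_eq]
  have norm_sq_ne : ∀ x, ‖f x‖ ^ 2 ≠ 0 := fun x ↦ pow_ne_zero 2 (norm_ne_zero_iff.2 (hf₀ x))
  fun_prop (disch := assumption)

lemma continuous_alignIsometry (e : E) (hf : Continuous f) (hg : Continuous g)
    (hf₀ : ∀ x, f x + e ≠ 0) : Continuous fun x ↦ alignIsometry e (f x) (g x) :=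
  (ℝ ∙ e).reflection.continuous.comp
    (continuous_reflection_span_singleton (hf.add continuous_const) hg hf₀)

lemma continuous_alignIsometry_symm (e : E) (hf : Continuous f) (hg : Continuous g)
    (hf₀ : ∀ x, f x + e ≠ 0) : Continuous fun x ↦ (alignIsometry e (f x)).symm (g x) := by
  simp only [alignIsometry, LinearIsometryEquiv.symm_trans, Submodule.reflection_symm]
  exact continuous_reflection_span_singleton (hf.add continuous_const)
    ((ℝ ∙ e).reflection.continuous.comp hg) hf₀

end Alignment

/-- Stereographic projection from `-e`, as a homeomorphism from the punctured sphere onto the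
hyperplane orthogonal to `e`. -/
def puncturedSphereHomeomorph (e : sphere (0 : E) 1) :
    ({-e}ᶜ : Set (sphere (0 : E) 1)) ≃ₜ (ℝ ∙ (e : E))ᗮ :=
  (Homeomorph.setCongr (stereographic_source (norm_eq_of_mem_sphere (-e))).symm).trans <|
    (stereographic _).toHomeomorphSourceTarget.trans <|
    (Homeomorph.setCongr (stereographic_target _)).trans <|
    (Homeomorph.Set.univ _).trans
      (ContinuousLinearEquiv.ofEq _ _ (by
        rw [coe_neg_sphere, ← Set.neg_singleton, Submodule.span_neg])).toHomeomorph

lemma puncturedSphereHomeomorph_self (e : sphere (0 : E) 1) (he : e ∈ ({-e}ᶜ : Set _)) :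
    puncturedSphereHomeomorph e ⟨e, he⟩ = 0 :=
  Subtype.ext (congrArg Subtype.val (stereographic_neg_apply e) :)

section Turning

variable {ι : Type*} [Fintype ι] {ℓ : ι → ℝ} {e : sphere (0 : E) 1} {u : ι → E}

lemma workMap_alignIsometry (u : slitChains ℓ e) :
    workMap ℓ (fun i ↦ alignIsometry (e : E) (endDirection ℓ e u) (u.1 i)) =
      ‖workMap ℓ u.1‖ • (e : E) := by
  rw [workMap_linearMap_comp]
  nth_rewrite 1 [← norm_smul_endDirection u]
  rw [map_smul, alignIsometry_apply_of_mem_sphere]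

lemma alignIsometry_mem_nonzeroPrismaticChains (u : slitChains ℓ e) :
    (fun i ↦ alignIsometry (e : E) (endDirection ℓ e u) (u.1 i)) ∈
      nonzeroPrismaticChains ℓ e := by
  have h := workMap_alignIsometry u
  refine ⟨?_, (isometry_comp_mem_openChains_iff _).2 u.2.2, _, norm_nonneg _, h⟩
  rw [Set.mem_ofPred_eq, h]
  exact smul_ne_zero (norm_ne_zero_iff.2 (workMap_ne_zero_of_mem_slitChains u.2))
    (ne_zero_of_mem_unit_sphere e)

lemma workMap_alignIsometry_symm (a : sphere (0 : E) 1) {t : ℝ} (h : workMap ℓ u = t • (e : E)) :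
    workMap ℓ (fun i ↦ (alignIsometry (e : E) a).symm (u i)) = t • (a : E) := by
  rw [workMap_linearMap_comp, h, LinearIsometryEquiv.symm_apply_eq, map_smul,
    alignIsometry_apply_of_mem_sphere]

lemma alignIsometry_symm_mem_slitChains (hu : u ∈ nonzeroPrismaticChains ℓ e)
    (a : ({-e}ᶜ : Set (sphere (0 : E) 1))) :
    (fun i ↦ (alignIsometry (e : E) a).symm (u i)) ∈ slitChains ℓ e := by
  obtain ⟨t, ht, h⟩ := exists_pos_workMap_eq_smul hu
  exact mem_slitChains_of_workMap_eq_smul ((isometry_comp_mem_openChains_iff _).2 hu.2.1) ht a.2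
    (workMap_alignIsometry_symm a.1 h)

lemma endDirection_alignIsometry_symm (hu : u ∈ nonzeroPrismaticChains ℓ e)
    (a : ({-e}ᶜ : Set (sphere (0 : E) 1))) :
    endDirection ℓ e ⟨_, alignIsometry_symm_mem_slitChains hu a⟩ = a := by
  obtain ⟨t, ht, h⟩ := exists_pos_workMap_eq_smul hu
  exact endDirection_eq_of_workMap_eq_smul _ ht (workMap_alignIsometry_symm a.1 h)

variable (ℓ e)

/-- A chain is determined by the direction of its end point and the prismatic chain obtained by
turning that direction to `e`. -/
def slitChainsHomeomorph :
    slitChains ℓ e ≃ₜ nonzeroPrismaticChains ℓ e × ({-e}ᶜ : Set (sphere (0 : E) 1)) where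
  toFun u := (⟨_, alignIsometry_mem_nonzeroPrismaticChains u⟩, endDirection ℓ e u)
  invFun z := ⟨_, alignIsometry_symm_mem_slitChains z.1.2 z.2⟩
  left_inv u := Subtype.ext <| funext fun i ↦ LinearIsometryEquiv.symm_apply_apply _ _
  right_inv z := by
    have direction_eq := endDirection_alignIsometry_symm z.1.2 z.2
    refine Prod.ext (Subtype.ext <| funext fun i ↦ ?_) direction_eq
    simp only [direction_eq, LinearIsometryEquiv.apply_symm_apply]
  continuous_toFun := by
    have hdir := continuous_endDirection ℓ e
    refine .prodMk (.subtype_mk (continuous_pi fun i ↦ ?_) _) hdir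
    exact continuous_alignIsometry _
      (continuous_subtype_val.comp (continuous_subtype_val.comp hdir))
      ((continuous_apply i).comp continuous_subtype_val)
      fun u h ↦ (endDirection ℓ e u).2 (Subtype.ext (eq_neg_of_add_eq_zero_left h))
  continuous_invFun := by
    refine .subtype_mk (continuous_pi fun i ↦ ?_) _
    exact continuous_alignIsometry_symm _
      (continuous_subtype_val.comp (continuous_subtype_val.comp continuous_snd))
      ((continuous_apply i).comp (continuous_subtype_val.comp continuous_fst))
      fun z h ↦ z.2.2 (Subtype.ext (eq_neg_of_add_eq_zero_left h))

lemma norm_workMap_slitChainsHomeomorph (u : slitChains ℓ e) :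
    ‖workMap ℓ (slitChainsHomeomorph ℓ e u).1.1‖ = ‖workMap ℓ u.1‖ := by
  change ‖workMap ℓ (fun i ↦ alignIsometry (e : E) (endDirection ℓ e u) (u.1 i))‖ = _
  rw [workMap_linearMap_comp, LinearIsometryEquiv.norm_map]

lemma slitChainsHomeomorph_of_mem_nonzeroPrismaticChains (hu : u ∈ slitChains ℓ e)
    (hu' : u ∈ nonzeroPrismaticChains ℓ e) (he : e ∈ ({-e}ᶜ : Set _)) :
    slitChainsHomeomorph ℓ e ⟨u, hu⟩ = (⟨u, hu'⟩, ⟨e, he⟩) := by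
  obtain ⟨t, ht, h⟩ := exists_pos_workMap_eq_smul hu'
  have direction_eq : endDirection ℓ e ⟨u, hu⟩ = ⟨e, he⟩ :=
    endDirection_eq_of_workMap_eq_smul _ ht h
  refine Prod.ext (Subtype.ext <| funext fun i ↦ ?_) direction_eq
  change alignIsometry (e : E) (endDirection ℓ e ⟨u, hu⟩) (u i) = u i
  rw [direction_eq, alignIsometry_self, LinearIsometryEquiv.coe_refl, id]

end Turning

theorem stmt_8_general {F ι : Type*} [AddCommMonoid F] [Module ℝ F] [TopologicalSpace F]
    [Fintype ι] (ℓ : ι → ℝ) (e : sphere (0 : E) 1) (L : (ℝ ∙ (e : E))ᗮ ≃L[ℝ] F)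
    (u₀ : ι → E) (hu₀ : u₀ ∈ openChains E ι) (hv : workMap ℓ u₀ ≠ 0)
    (R : E ≃ₗᵢ[ℝ] E) (hR : R (workMap ℓ u₀) = ‖workMap ℓ u₀‖ • (e : E)) :
    ∃ W : Set (ι → E), W ⊆ openChains E ι ∧ (∃ O, IsOpen O ∧ W = O ∩ openChains E ι) ∧
      ∃ U : Set (ι → E), U ⊆ prismaticChains ℓ e ∧
        (∃ O, IsOpen O ∧ U = O ∩ prismaticChains ℓ e) ∧
        ∃ (hW : u₀ ∈ W) (hU : (fun i ↦ R (u₀ i)) ∈ U) (h : W ≃ₜ U × F),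
          h ⟨u₀, hW⟩ = (⟨fun i ↦ R (u₀ i), hU⟩, 0) ∧
          ∀ w : W, ‖workMap ℓ (w : ι → E)‖ = ‖workMap ℓ ((h w).1 : ι → E)‖ := by
  have he : e ∈ ({-e}ᶜ : Set (sphere (0 : E) 1)) := ne_neg_of_mem_unit_sphere ℝ e
  have hpos : 0 < ‖workMap ℓ u₀‖ := norm_pos_iff.2 hv
  have hRunit := (isometry_comp_mem_openChains_iff R).2 hu₀
  have hRu₀ := (workMap_linearMap_comp ℓ R u₀).trans hR
  have hW := mem_slitChains_of_workMap_eq_smul hRunit hpos he hRu₀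
  have hU : (fun i ↦ R (u₀ i)) ∈ nonzeroPrismaticChains ℓ e :=
    ⟨workMap_ne_zero_of_mem_slitChains hW, hRunit, _, hpos.le, hRu₀⟩
  let W := (fun (u : ι → E) i ↦ R (u i)) ⁻¹' slitChains ℓ e
  let turn : W ≃ₜ slitChains ℓ e :=
    (Homeomorph.piCongrRight fun _ ↦ R.toHomeomorph).subtype fun _ ↦ Iff.rfl
  let chart := (puncturedSphereHomeomorph e).trans L.toHomeomorph
  refine ⟨W, fun u hu ↦ (isometry_comp_mem_openChains_iff R).1 hu.2,
    exists_isOpen_preimage_slitChains_eq ℓ e R, nonzeroPrismaticChains ℓ e,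
    Set.inter_subset_right, ⟨_, isOpen_ne_fun (continuous_workMap ℓ) continuous_const, rfl⟩, hW, hU,
    turn.trans ((slitChainsHomeomorph ℓ e).trans (.prodCongr (.refl _) chart)), ?_, fun w ↦ ?_⟩
  · have chart_self : chart ⟨e, he⟩ = 0 :=
      (congrArg L (puncturedSphereHomeomorph_self e he)).trans (map_zero L)
    change Prod.map id chart (slitChainsHomeomorph ℓ e ⟨_, hW⟩) = _
    rw [slitChainsHomeomorph_of_mem_nonzeroPrismaticChains ℓ e hW hU he, Prod.map_apply,
      chart_self, id]
  · calc ‖workMap ℓ w.1‖ = ‖workMap ℓ (turn w).1‖ := by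
          rw [← R.norm_map, ← workMap_linearMap_comp]; rfl
      _ = _ := (norm_workMap_slitChainsHomeomorph ℓ e (turn w)).symm

end

theorem stmt_8 (d k : ℕ) (hd : 2 ≤ d) [NeZero d] (hk : 1 ≤ k)
    (ℓ : Fin k → ℝ) (hℓ : ∀ i, 0 < ℓ i)
    (u0 : Fin k → EuclideanSpace ℝ (Fin d)) (hu0 : ∀ i, ‖u0 i‖ = 1)
    (hv : (∑ i, ℓ i • u0 i) ≠ 0)
    (R : EuclideanSpace ℝ (Fin d) ≃ₗᵢ[ℝ] EuclideanSpace ℝ (Fin d))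
    (hR : R (∑ i, ℓ i • u0 i) =
      ‖∑ i, ℓ i • u0 i‖ • (EuclideanSpace.single (0 : Fin d) (1 : ℝ))) :
    ∃ W : Set (Fin k → EuclideanSpace ℝ (Fin d)),
      W ⊆ {u | ∀ i, ‖u i‖ = 1} ∧
      (∃ O, IsOpen O ∧ W = O ∩ {u | ∀ i, ‖u i‖ = 1}) ∧
      ∃ U : Set (Fin k → EuclideanSpace ℝ (Fin d)),
        U ⊆ {u | (∀ i, ‖u i‖ = 1) ∧ ∃ t : ℝ, 0 ≤ t ∧
              ∑ i, ℓ i • u i = t • (EuclideanSpace.single (0 : Fin d) (1 : ℝ))} ∧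
        (∃ O', IsOpen O' ∧ U = O' ∩ {u | (∀ i, ‖u i‖ = 1) ∧ ∃ t : ℝ, 0 ≤ t ∧
              ∑ i, ℓ i • u i = t • (EuclideanSpace.single (0 : Fin d) (1 : ℝ))}) ∧
        ∃ (hWmem : u0 ∈ W) (hUmem : (fun i => R (u0 i)) ∈ U)
          (h : ↥W ≃ₜ ↥U × EuclideanSpace ℝ (Fin (d - 1))),
          h ⟨u0, hWmem⟩ = (⟨fun i => R (u0 i), hUmem⟩, 0) ∧
          ∀ w : ↥W, ‖∑ i, ℓ i • (w : Fin k → EuclideanSpace ℝ (Fin d)) i‖ =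
            ‖∑ i, ℓ i • ((h w).1 : Fin k → EuclideanSpace ℝ (Fin d)) i‖ := by
  have : Fact (Module.finrank ℝ (EuclideanSpace ℝ (Fin d)) = d - 1 + 1) := ⟨by
    rw [finrank_euclideanSpace_fin, Nat.sub_add_cancel (by lia)]⟩
  let e : sphere (0 : EuclideanSpace ℝ (Fin d)) 1 := ⟨EuclideanSpace.single 0 1, by simp⟩
  exact stmt_8_general ℓ e (OrthonormalBasis.fromOrthogonalSpanSingleton (d - 1)
    (ne_zero_of_mem_unit_sphere e)).repr.toContinuousLinearEquiv u0 hu0 hv R hR
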